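/- Let k be an algebraically closed field, G a group, and let (V, ξ) be an Ad-equivariant family over G, i.e. for each x ∈ G a k-vector space V x together with k-linear equivalences ξ g x : V x ≃ V (g * x * g⁻¹) satisfying the cocycle conditions ξ g' (g * x * g⁻¹) ∘ ξ g x = ξ (g' * g) x and ξ 1 x = id. Fix x ∈ G and assume V x is nonzero and finite-dimensional over k, and that V x is irreducible under the action of the centralizer of {x} (i.e. the only k-subspaces of V x stable under ξ h x for all h in the centralizer of {x} are 0 and V x). Then there exists a unique scalar θ ∈ k such that the canonical automorphism Θ_x := ξ x x equals θ • id on V x; moreover, if x has finite order n in G, then θ^n = 1. -/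

import Mathlib

/-- Transport a vector space along an equality of points of the index type. -/
def castLE (k : Type*) [Field k] {ι : Type*} {V : ι → Type*}
    [∀ i, AddCommGroup (V i)] [∀ i, Module k (V i)] {i j : ι} (h : i = j) :
    V i ≃ₗ[k] V j := by subst h; exact LinearEquiv.refl k (V i)

/-- An element of the centralizer of `{x}` conjugates `x` to itself. -/
lemma conj_of_mem_centralizer {G : Type*} [Group G] {x : G}
    (h : Subgroup.centralizer ({x} : Set G)) : (h : G) * x * (h : G)⁻¹ = x := by
  have hx : x * (h : G) = (h : G) * x :=
    (Subgroup.mem_centralizer_iff.mp h.2) x (Set.mem_singleton x)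
  rw [← hx, mul_inv_cancel_right]

/-! The element `x` is central in its own centralizer `Z`, and `Θ_x` is its action on the
representation `V x` of `Z`. By Schur's lemma a central element acts on an irreducible
representation by a scalar, and the powers of this scalar are the scalars by which the powers of
`x` act. -/

section CentralElement

variable {k G W : Type*} [Monoid G]

lemma isIrreducible_of_forall_submodule [Field k] [AddCommGroup W] [Module k W] [Nontrivial W]
    (ρ : Representation k G W)
    (h : ∀ U : Submodule k W, (∀ (g : G) (w : W), w ∈ U → ρ g w ∈ U) → U = ⊥ ∨ U = ⊤) :
    ρ.IsIrreducible where
  exists_pair_ne :=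
    ⟨⊥, ⊤, fun e => bot_ne_top (α := Submodule k W) (congrArg Subrepresentation.toSubmodule e)⟩
  eq_bot_or_eq_top U :=
    (h U.toSubmodule fun g _ hw => U.apply_mem_toSubmodule g hw).imp
      (fun e => Subrepresentation.toSubmodule_injective e)
      (fun e => Subrepresentation.toSubmodule_injective e)

lemma existsUnique_apply_eq_algebraMap_of_mem_center [Field k] [IsAlgClosed k] [AddCommGroup W]
    [Module k W] [FiniteDimensional k W] (ρ : Representation k G W) [ρ.IsIrreducible] {z : G}
    (hz : z ∈ Submonoid.center G) : ∃! θ : k, ρ z = algebraMap k (Module.End k W) θ := by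
  have hSchur : ∃! θ : k, algebraMap k (ρ.IntertwiningMap ρ) θ = .centralMul ρ z hz :=
    Representation.IsIrreducible.algebraMap_intertwiningMap_bijective_of_isAlgClosed.existsUnique _
  refine (existsUnique_congr fun θ => ?_).mp hSchur
  rw [eq_comm, ← (Representation.IntertwiningMap.toLinearMap_injective ρ ρ).eq_iff]
  rfl

lemma pow_eq_one_of_apply_eq_algebraMap [CommSemiring k] [AddCommMonoid W] [Module k W]
    [FaithfulSMul k W] {ρ : Representation k G W} {g : G} {θ : k}
    (hθ : ρ g = algebraMap k (Module.End k W) θ) {n : ℕ} (hg : g ^ n = 1) : θ ^ n = 1 := by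
  have hpow : algebraMap k (Module.End k W) (θ ^ n) = algebraMap k (Module.End k W) 1 := by
    rw [map_pow, ← hθ, ← map_pow, hg, map_one, map_one]
  exact eq_of_smul_eq_smul (LinearMap.ext_iff.mp hpow)

end CentralElement

lemma mk_mem_center_centralizer {G : Type*} [Group G] {S : Set G} {x : G} (hxS : x ∈ S)
    (hx : x ∈ Subgroup.centralizer S) :
    (⟨x, hx⟩ : Subgroup.centralizer S) ∈ Submonoid.center (Subgroup.centralizer S) :=
  Submonoid.mem_center_iff.mpr fun h =>
    Subtype.ext (Subgroup.mem_centralizer_iff.mp h.2 x hxS).symm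

lemma self_mem_centralizer_singleton {G : Type*} [Group G] (x : G) :
    x ∈ Subgroup.centralizer ({x} : Set G) :=
  Subgroup.mem_centralizer_singleton_iff.mpr rfl

lemma castLE_castLE (k : Type*) [Field k] {ι : Type*} {V : ι → Type*}
    [∀ i, AddCommGroup (V i)] [∀ i, Module k (V i)] {i j l : ι} (h : i = j) (h' : j = l)
    (v : V i) : castLE k h' (castLE k h v : V j) = (castLE k (h.trans h') v : V l) := by
  subst h h'
  rfl

lemma apply_castLE {k : Type*} [Field k] {ι : Type*} {V : ι → Type*} [∀ i, AddCommGroup (V i)]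
    [∀ i, Module k (V i)] {f : ι → ι} (φ : ∀ i, V i → V (f i)) {i j : ι} (h : i = j) (v : V i) :
    φ j (castLE k h v) = castLE k (congrArg f h) (φ i v) := by
  subst h
  rfl

section AdEquivariant

variable {k : Type*} [Field k] {G : Type*} [Group G] {V : G → Type*}
  [∀ x, AddCommGroup (V x)] [∀ x, Module k (V x)]

/-- The maps `ξ g x` make `V` an `Ad`-equivariant family over `G`. Both laws are equalities of
maps up to transport of the target along an equality in `G`. -/
structure IsAdEquivariant (ξ : ∀ g x : G, V x ≃ₗ[k] V (g * x * g⁻¹)) : Prop where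
  cocycle (g' g x : G) : (ξ g x).trans (ξ g' (g * x * g⁻¹)) =
    (ξ (g' * g) x).trans
      (castLE k (show (g' * g) * x * (g' * g)⁻¹ = g' * (g * x * g⁻¹) * g'⁻¹ by
        simp only [mul_inv_rev, mul_assoc]))
  norm (x : G) :
    (ξ 1 x).trans (castLE k (show (1 : G) * x * (1 : G)⁻¹ = x by
      rw [one_mul, inv_one, mul_one])) = LinearEquiv.refl k (V x)

/-- The canonical automorphism `Θ_x = ξ x x` of the fibre at `x`, with its target transported back
to `V x` along `x * x * x⁻¹ = x`. -/
def canonicalAut (ξ : ∀ g x : G, V x ≃ₗ[k] V (g * x * g⁻¹)) (x : G) : V x ≃ₗ[k] V x :=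
  (ξ x x).trans (castLE k (mul_inv_cancel_right x x))

lemma canonicalAut_eq_algebraMap_iff {ξ : ∀ g x : G, V x ≃ₗ[k] V (g * x * g⁻¹)} {x : G} {θ : k} :
    (canonicalAut ξ x).toLinearMap = algebraMap k (Module.End k (V x)) θ ↔
      ∀ v : V x, castLE k (mul_inv_cancel_right x x) (ξ x x v) = θ • v :=
  LinearMap.ext_iff

namespace IsAdEquivariant

variable {ξ : ∀ g x : G, V x ≃ₗ[k] V (g * x * g⁻¹)}

/-- The action of the centralizer of `{x}` on the fibre of an `Ad`-equivariant family at `x`. -/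
def centralizerRep (hξ : IsAdEquivariant ξ) (x : G) :
    Representation k (Subgroup.centralizer ({x} : Set G)) (V x) where
  toFun h := (ξ (h : G) x).trans (castLE k (conj_of_mem_centralizer h))
  map_one' := LinearMap.ext fun v => LinearEquiv.congr_fun (hξ.norm x) v
  map_mul' h' h := LinearMap.ext fun v => by
    have hcocycle : ξ h' (h * x * (h : G)⁻¹) (ξ h x v) = castLE k _ (ξ (h' * h) x v) :=
      LinearEquiv.congr_fun (hξ.cocycle h' h x) v
    change castLE k _ (ξ (h' * h) x v) = castLE k _ (ξ h' x (castLE k _ (ξ h x v)))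
    rw [apply_castLE fun y => ξ h' y, hcocycle, castLE_castLE, castLE_castLE]

lemma centralizerRep_self (hξ : IsAdEquivariant ξ) (x : G) :
    hξ.centralizerRep x ⟨x, self_mem_centralizer_singleton x⟩ = (canonicalAut ξ x).toLinearMap :=
  rfl

theorem existsUnique_canonicalAut_eq_algebraMap [IsAlgClosed k] (hξ : IsAdEquivariant ξ) (x : G)
    [FiniteDimensional k (V x)] [(hξ.centralizerRep x).IsIrreducible] :
    ∃! θ : k, (canonicalAut ξ x).toLinearMap = algebraMap k (Module.End k (V x)) θ := by
  rw [← hξ.centralizerRep_self x]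
  exact existsUnique_apply_eq_algebraMap_of_mem_center _
    (mk_mem_center_centralizer (Set.mem_singleton x) _)

theorem pow_eq_one_of_canonicalAut_eq_algebraMap (hξ : IsAdEquivariant ξ) {x : G}
    [FaithfulSMul k (V x)] {θ : k}
    (hθ : (canonicalAut ξ x).toLinearMap = algebraMap k (Module.End k (V x)) θ)
    {n : ℕ} (hn : x ^ n = 1) : θ ^ n = 1 := by
  rw [← hξ.centralizerRep_self x] at hθ
  exact pow_eq_one_of_apply_eq_algebraMap hθ (Subtype.ext hn)

end IsAdEquivariant

end AdEquivariant

/-- Schur's lemma for the canonical automorphism of an `Ad`-equivariant family: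
if `V x` is nonzero, finite dimensional over an algebraically closed field, and
irreducible under the action of the centralizer of `{x}`, then `Θ_x = ξ x x` is a
unique scalar `θ`; moreover if `x` has finite order `n` then `θ ^ n = 1`. -/
theorem canonical_automorphism_is_root_of_unity_scalar
    {k : Type*} [Field k] [IsAlgClosed k] {G : Type*} [Group G]
    (V : G → Type*) [∀ x, AddCommGroup (V x)] [∀ x, Module k (V x)]
    (ξ : ∀ g x : G, V x ≃ₗ[k] V (g * x * g⁻¹))
    (cocycle : ∀ g' g x : G, (ξ g x).trans (ξ g' (g * x * g⁻¹)) =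
      (ξ (g' * g) x).trans
        (castLE k (show (g' * g) * x * (g' * g)⁻¹ = g' * (g * x * g⁻¹) * g'⁻¹ by group)))
    (norm : ∀ x : G,
      (ξ 1 x).trans (castLE k (show (1 : G) * x * (1 : G)⁻¹ = x by group)) =
        LinearEquiv.refl k (V x))
    (x : G) [Nontrivial (V x)] [FiniteDimensional k (V x)]
    (irr : ∀ W : Submodule k (V x),
      (∀ (h : Subgroup.centralizer ({x} : Set G)) (v : V x),
        v ∈ W → castLE k (conj_of_mem_centralizer h) (ξ (h : G) x v) ∈ W) →
      W = ⊥ ∨ W = ⊤) :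
    (∃! θ : k, ∀ v : V x,
        castLE k (show x * x * x⁻¹ = x by group) (ξ x x v) = θ • v) ∧
    ∀ θ : k, (∀ v : V x,
        castLE k (show x * x * x⁻¹ = x by group) (ξ x x v) = θ • v) →
      IsOfFinOrder x → θ ^ orderOf x = 1 := by
  have hξ : IsAdEquivariant ξ := ⟨cocycle, norm⟩
  have : (hξ.centralizerRep x).IsIrreducible := isIrreducible_of_forall_submodule _ irr
  simp only [← canonicalAut_eq_algebraMap_iff]
  exact ⟨hξ.existsUnique_canonicalAut_eq_algebraMap x, fun θ hθ _ =>
    hξ.pow_eq_one_of_canonicalAut_eq_algebraMap hθ (pow_orderOf_eq_one x)⟩
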